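/- Let F be a maximal hke collection. Then ⋂F = ∅. -/

import Mathlib

open Finset

/-- The union of a finite collection of finite sets. -/
def famUnion (Γ : Finset (Finset ℕ)) : Finset ℕ := Γ.sup id

/-- The intersection of a finite collection of finite sets
(equal to the usual intersection when the collection is nonempty). -/
def famInter (Γ : Finset (Finset ℕ)) : Finset ℕ :=
  (Γ.sup id).filter (fun x => ∀ A ∈ Γ, x ∈ A)

/-- `F` is a hereditary König–Egerváry (hke) collection with `α(F) = α`:
`α` is a positive integer and `|⋃Γ| + |⋂Γ| = 2α` for every nonempty subcollection `Γ` of `F`. -/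
def IsHKE (F : Finset (Finset ℕ)) (α : ℕ) : Prop :=
  0 < α ∧ ∀ Γ ⊆ F, Γ.Nonempty → (famUnion Γ).card + (famInter Γ).card = 2 * α

/-- `F` is a maximal hke collection: it is an hke collection and no collection
properly containing it is an hke collection. -/
def IsMaxHKE (F : Finset (Finset ℕ)) : Prop :=
  (∃ α, IsHKE F α) ∧ ∀ F' : Finset (Finset ℕ), F ⊂ F' → ¬ ∃ β, IsHKE F' β

/-!
Suppose `x ∈ ⋂F`, pick `A ∈ F`, and pad `⋃F` to a set `T` of exactly `2α` elements. Adding the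
complement `T \ A` to `F` preserves the hke property: for nonempty `Δ ⊆ F` the sets
`(T \ A) ∪ ⋃Δ` and `A ∪ ⋃Δ` have union `T` and intersection `⋃Δ`, while `T \ A` and `A` split
`⋂Δ` in two, so the count for `insert (T \ A) Δ` follows from those for `Δ` and `insert A Δ`.
By maximality `T \ A ∈ F`, and `x` would lie in both `A` and `T \ A`.
-/

section Complement

variable {β : Type*} [DecidableEq β] {A T V J : Finset β}

theorem card_sdiff_union_add_card_union (hA : A ⊆ T) (hV : V ⊆ T) :
    #((T \ A) ∪ V) + #(A ∪ V) = #T + #V := by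
  have union_eq : ((T \ A) ∪ V) ∪ (A ∪ V) = T := by
    rw [← union_union_distrib_right, sdiff_union_of_subset hA, union_eq_left.2 hV]
  have inter_eq : ((T \ A) ∪ V) ∩ (A ∪ V) = V := by
    rw [← inter_union_distrib_right, sdiff_inter_self, empty_union]
  rw [← card_union_add_card_inter, union_eq, inter_eq]

theorem card_sdiff_inter_add_card_inter (hJ : J ⊆ T) :
    #((T \ A) ∩ J) + #(A ∩ J) = #J := by
  rw [inter_comm (T \ A), ← inter_sdiff_assoc, inter_eq_left.2 hJ, inter_comm A,
    card_sdiff_add_card_inter]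

end Complement

section Family

variable {Γ F : Finset (Finset ℕ)} {A B T : Finset ℕ} {x α : ℕ}

theorem famUnion_singleton (B : Finset ℕ) : famUnion {B} = B :=
  sup_singleton

theorem famUnion_insert (B : Finset ℕ) (Γ : Finset (Finset ℕ)) :
    famUnion (insert B Γ) = B ∪ famUnion Γ :=
  sup_insert

theorem famUnion_mono (h : Γ ⊆ F) : famUnion Γ ⊆ famUnion F :=
  sup_mono h

theorem subset_famUnion (hA : A ∈ F) : A ⊆ famUnion F :=
  le_sup (f := id) hA

theorem famInter_subset_famUnion (Γ : Finset (Finset ℕ)) : famInter Γ ⊆ famUnion Γ :=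
  filter_subset _ _

theorem famInter_subset (hA : A ∈ Γ) : famInter Γ ⊆ A :=
  fun _ hx => (mem_filter.1 hx).2 A hA

theorem nonempty_of_mem_famInter (hx : x ∈ famInter Γ) : Γ.Nonempty := by
  obtain ⟨A, hA, -⟩ := mem_sup.1 (famInter_subset_famUnion Γ hx)
  exact ⟨A, hA⟩

theorem mem_famInter (hΓ : Γ.Nonempty) : x ∈ famInter Γ ↔ ∀ A ∈ Γ, x ∈ A := by
  obtain ⟨A, hA⟩ := hΓ
  exact ⟨fun hx B hB => famInter_subset hB hx,
    fun hx => mem_filter.2 ⟨subset_famUnion hA (hx A hA), hx⟩⟩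

theorem famInter_singleton (B : Finset ℕ) : famInter {B} = B := by
  ext x
  simp [mem_famInter]

theorem famInter_insert (B : Finset ℕ) (hΓ : Γ.Nonempty) :
    famInter (insert B Γ) = B ∩ famInter Γ := by
  ext x
  simp [mem_famInter, hΓ]

namespace IsHKE

theorem card_eq (hF : IsHKE F α) (hA : A ∈ F) : #A = α := by
  have hsingle := hF.2 {A} (singleton_subset_iff.2 hA) (singleton_nonempty A)
  rw [famUnion_singleton, famInter_singleton] at hsingle
  omega

theorem card_famUnion_le (hF : IsHKE F α) (hne : F.Nonempty) : #(famUnion F) ≤ 2 * α :=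
  (Nat.le_add_right _ _).trans (hF.2 F Subset.rfl hne).le

theorem insert_of_card (hF : IsHKE F α) (hB : #B = α)
    (h : ∀ Δ ⊆ F, Δ.Nonempty → #(B ∪ famUnion Δ) + #(B ∩ famInter Δ) = 2 * α) :
    IsHKE (insert B F) α := by
  refine ⟨hF.1, fun Γ hΓ hΓne => ?_⟩
  by_cases hBΓ : B ∈ Γ
  · have hΔ : Γ.erase B ⊆ F := subset_insert_iff.1 hΓ
    rw [← insert_erase hBΓ]
    rcases (Γ.erase B).eq_empty_or_nonempty with hempty | hΔne
    · rw [hempty, insert_empty_eq, famUnion_singleton, famInter_singleton, hB, two_mul]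
    · rw [famUnion_insert, famInter_insert B hΔne]
      exact h _ hΔ hΔne
  · exact hF.2 Γ ((subset_insert_iff_of_notMem hBΓ).1 hΓ) hΓne

theorem insert_sdiff (hF : IsHKE F α) (hA : A ∈ F) (hT : famUnion F ⊆ T) (hTcard : #T = 2 * α) :
    IsHKE (insert (T \ A) F) α := by
  have hAT : A ⊆ T := (subset_famUnion hA).trans hT
  refine hF.insert_of_card ?_ fun Δ hΔ hΔne => ?_
  · rw [card_sdiff_of_subset hAT, hTcard, hF.card_eq hA]
    omega
  · have hVT : famUnion Δ ⊆ T := (famUnion_mono hΔ).trans hT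
    have hcardΔ := hF.2 Δ hΔ hΔne
    have hcardAΔ := hF.2 (insert A Δ) (insert_subset hA hΔ) (insert_nonempty A Δ)
    rw [famUnion_insert, famInter_insert A hΔne] at hcardAΔ
    have hunion := card_sdiff_union_add_card_union hAT hVT
    have hinter := card_sdiff_inter_add_card_inter (A := A)
      ((famInter_subset_famUnion Δ).trans hVT)
    omega

end IsHKE

theorem IsMaxHKE.mem_of_isHKE_insert (hF : IsMaxHKE F) (hB : IsHKE (insert B F) α) : B ∈ F := by
  by_contra hBF
  exact hF.2 _ (ssubset_insert hBF) ⟨α, hB⟩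

end Family

/-- a maximal hke collection has empty intersection. -/
theorem famInter_eq_empty_of_isMaxHKE (F : Finset (Finset ℕ)) (h : IsMaxHKE F) :
    famInter F = ∅ := by
  obtain ⟨α, hF⟩ := h.1
  refine eq_empty_of_forall_notMem fun x hx => ?_
  have hne : F.Nonempty := nonempty_of_mem_famInter hx
  have ⟨A, hA⟩ := hne
  obtain ⟨T, hUT, hTcard⟩ :=
    Infinite.exists_superset_card_eq (famUnion F) (2 * α) (hF.card_famUnion_le hne)
  have hcompl : T \ A ∈ F := h.mem_of_isHKE_insert (hF.insert_sdiff hA hUT hTcard)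
  exact (mem_sdiff.1 (famInter_subset hcompl hx)).2 (famInter_subset hA hx)
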